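/- arXiv:1607.05132 — 2 statements merged into one kernel-verified Lean document; each statement's English description precedes it below -/
import Mathlib

section
/- Let n ≥ 2 and let c ≥ 1 be a real number. Set x = 1 + 3(c+1)·ln n, and for each 1 ≤ i ≤ ⌈log₂ n⌉ set h_i = 2^i and let C_i be a random subset of an n-element set obtained by including each element independently with probability min(x/h_i, 1). Then with probability at least 1 − 1/n^c, it holds simultaneously for all 1 ≤ i ≤ ⌈log₂ n⌉ that |C_i| ≤ 3·x·n/h_i. -/
open MeasureTheory

/-- The Bernoulli measure on `Bool` with success probability `p`. -/
noncomputable def bern (p : ℝ) : Measure Bool :=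
  (ENNReal.ofReal p) • Measure.dirac true + (ENNReal.ofReal (1 - p)) • Measure.dirac false

lemma bern_prob (p : ℝ) (h0 : 0 ≤ p) (h1 : p ≤ 1) : IsProbabilityMeasure (bern p) := by
  constructor
  simp only [bern, Measure.add_apply, Measure.smul_apply, measure_univ, smul_eq_mul, mul_one]
  rw [← ENNReal.ofReal_add h0 (by linarith)]
  simp

lemma bern_lint (p : ℝ) (h0 : 0 ≤ p) (h1 : p ≤ 1) :
    ∫⁻ b, ENNReal.ofReal (if b = true then Real.exp 1 else 1) ∂(bern p)
      ≤ ENNReal.ofReal (Real.exp (2 * p)) := by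
  rw [bern, lintegral_add_measure, lintegral_smul_measure, lintegral_smul_measure,
    lintegral_dirac, lintegral_dirac]
  simp only [if_true, smul_eq_mul, Bool.false_eq_true, if_false]
  rw [← ENNReal.ofReal_mul h0, ← ENNReal.ofReal_mul (by linarith),
    ← ENNReal.ofReal_add (by positivity) (by linarith)]
  apply ENNReal.ofReal_le_ofReal
  have := Real.exp_one_lt_d9
  have := Real.add_one_le_exp (2 * p)
  nlinarith

lemma tail {α : Type} [Fintype α] [DecidableEq α] (p : ℝ) (h0 : 0 ≤ p) (h1 : p ≤ 1) :
    (Measure.pi fun _ : α => bern p) {f : α → Bool |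
      3 * ((Fintype.card α : ℝ) * p) ≤ ((Finset.univ.filter fun a : α => f a = true).card : ℝ)}
      ≤ ENNReal.ofReal (Real.exp (-((Fintype.card α : ℝ) * p))) := by
  have := bern_prob p h0 h1
  set m := (Fintype.card α : ℝ) * p with hm
  set g : Bool → ENNReal := fun b => ENNReal.ofReal (if b = true then Real.exp 1 else 1) with hg
  have key : ∫⁻ f : α → Bool, ∏ a, g (f a) ∂(Measure.pi fun _ : α => bern p)
      ≤ ENNReal.ofReal (Real.exp (2 * m)) := by
    have hprod : ∫⁻ f : α → Bool, ∏ a, g (f a) ∂(Measure.pi fun _ : α => bern p)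
        = ∏ _a : α, ∫⁻ b, g b ∂(bern p) := by
      simp only [lintegral_fintype, Measure.pi_singleton, ← Finset.prod_mul_distrib]
      rw [Finset.prod_univ_sum, Fintype.piFinset_univ]
    rw [hprod]
    calc _ ≤ ∏ a : α, ENNReal.ofReal (Real.exp (2 * p)) :=
          Finset.prod_le_prod' fun a _ => bern_lint p h0 h1
      _ = _ := by
          rw [← ENNReal.ofReal_prod_of_nonneg (fun _ _ => (Real.exp_pos _).le), ← Real.exp_sum]
          simp [hm]; ring_nf
  have hgf : ∀ f : α → Bool, ∏ a, g (f a) =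
      ENNReal.ofReal (Real.exp ((Finset.univ.filter fun a : α => f a = true).card : ℝ)) := by
    intro f
    simp only [hg]
    rw [← ENNReal.ofReal_prod_of_nonneg (fun _ _ => by split_ifs <;> positivity),
      Finset.prod_ite]
    simp [← Real.exp_nat_mul]
  have mk := mul_meas_ge_le_lintegral (μ := Measure.pi fun _ : α => bern p)
    (f := fun f : α → Bool => ∏ a, g (f a)) (measurable_of_finite _)
    (ENNReal.ofReal (Real.exp (3 * m)))
  have mk2 := mk.trans key
  have hs : {f : α → Bool | ENNReal.ofReal (Real.exp (3 * m)) ≤ ∏ a, g (f a)} =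
    {f : α → Bool | 3 * m ≤ ((Finset.univ.filter fun a : α => f a = true).card : ℝ)} := by
    ext f
    simp only [Set.mem_ofPred_eq]
    rw [hgf, ENNReal.ofReal_le_ofReal_iff (Real.exp_pos _).le, Real.exp_le_exp]
  rw [hs] at mk2
  have h3 : ENNReal.ofReal (Real.exp (-(3 * m))) * ENNReal.ofReal (Real.exp (3 * m)) = 1 := by
    rw [← ENNReal.ofReal_mul (Real.exp_pos _).le, ← Real.exp_add]; simp
  generalize (Measure.pi fun _ : α => bern p) {f : α → Bool |
    3 * m ≤ ((Finset.univ.filter fun a : α => f a = true).card : ℝ)} = q at mk2 ⊢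
  calc q = ENNReal.ofReal (Real.exp (-(3 * m))) * (ENNReal.ofReal (Real.exp (3 * m)) * q) := by
        rw [← mul_assoc, h3, one_mul]
    _ ≤ ENNReal.ofReal (Real.exp (-(3 * m))) * ENNReal.ofReal (Real.exp (2 * m)) := by gcongr
    _ = _ := by
        rw [← ENNReal.ofReal_mul (Real.exp_pos _).le, ← Real.exp_add]; ring_nf

/-- Let `x = 1 + 3(c+1) ln n` and, for `1 ≤ i ≤ ⌈log₂ n⌉`, let `C_i` be a
random subset of an `n`-element set obtained by including each element independently with
probability `min (x / 2^i) 1` (no independence between different `i` assumed).  Then with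
probability at least `1 - 1/n^c`, simultaneously for all `1 ≤ i ≤ ⌈log₂ n⌉` we have
`|C_i| ≤ 3 x n / 2^i`. -/
theorem stmt4 {α : Type} [Fintype α] [DecidableEq α]
    {Ω : Type} [MeasurableSpace Ω] (μ : Measure Ω) [IsProbabilityMeasure μ]
    (n : ℕ) (hn : 2 ≤ n) (hcard : Fintype.card α = n)
    (c x : ℝ) (hc : 1 ≤ c) (hx : x = 1 + 3 * (c + 1) * Real.log (n : ℝ))
    -- `X i` is the indicator family of the random subset `C_i`
    (X : ℕ → Ω → (α → Bool)) (hXm : ∀ i, Measurable (X i))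
    -- each `C_i` is distributed as the product of independent Bernoulli(min (x/2^i) 1)
    (hX : ∀ i : ℕ, 1 ≤ i → i ≤ Nat.clog 2 n →
      Measure.map (X i) μ = Measure.pi fun _ : α => bern (min (x / (2 : ℝ) ^ i) 1)) :
    ENNReal.ofReal (1 - 1 / (n : ℝ) ^ c) ≤
      μ {ω : Ω | ∀ i : ℕ, 1 ≤ i → i ≤ Nat.clog 2 n →
          ((Finset.univ.filter fun a : α => X i ω a = true).card : ℝ) ≤
            3 * x * (n : ℝ) / (2 : ℝ) ^ i} := by
  have hn1 : (2 : ℝ) ≤ n := by exact_mod_cast hn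
  have hn0 : (0 : ℝ) < n := by linarith
  have hlog : 0 ≤ Real.log (n : ℝ) := Real.log_nonneg (by linarith)
  have hx1 : 1 ≤ x := by rw [hx]; nlinarith [mul_nonneg (by linarith : 0 ≤ c + 1) hlog]
  set B : ℕ → Set Ω := fun i => {ω | 3 * x * (n : ℝ) / (2 : ℝ) ^ i <
    ((Finset.univ.filter fun a : α => X i ω a = true).card : ℝ)} with hB
  set G := {ω : Ω | ∀ i : ℕ, 1 ≤ i → i ≤ Nat.clog 2 n →
          ((Finset.univ.filter fun a : α => X i ω a = true).card : ℝ) ≤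
            3 * x * (n : ℝ) / (2 : ℝ) ^ i} with hG
  have hBi : ∀ i ∈ Finset.Icc 1 (Nat.clog 2 n),
      μ (B i) ≤ ENNReal.ofReal (1 / (n : ℝ) ^ (c + 1)) := by
    intro i hi
    obtain ⟨hi1, hi2⟩ := Finset.mem_Icc.mp hi
    have h2 : (0 : ℝ) < 2 ^ i := by positivity
    by_cases hp : x / (2 : ℝ) ^ i ≤ 1
    · have hmap := hX i hi1 hi2
      rw [min_eq_left hp] at hmap
      have ht := tail (α := α) (x / (2 : ℝ) ^ i) (by positivity) hp
      rw [← hmap, Measure.map_apply (hXm i) (Set.toFinite _).measurableSet, hcard] at ht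
      refine (measure_mono ?_).trans (ht.trans ?_)
      · intro ω hω
        simp only [hB, Set.mem_ofPred_eq, Set.mem_preimage] at hω ⊢
        refine le_trans (le_of_eq ?_) hω.le
        ring
      · apply ENNReal.ofReal_le_ofReal
        rw [one_div, ← Real.rpow_neg hn0.le, Real.rpow_def_of_pos hn0, Real.exp_le_exp]
        have h2i : (2 : ℝ) ^ i ≤ 2 * n := by
          have h := Nat.pow_pred_clog_lt_self (b := 2) (by norm_num) (x := n) (by omega)
          have h' : 2 ^ i ≤ 2 * n := by
            calc 2 ^ i = 2 * 2 ^ (i - 1) := by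
                  rw [← pow_succ']; congr 1; omega
              _ ≤ 2 * 2 ^ (Nat.clog 2 n).pred := by
                  gcongr
                  · norm_num
                  · simp only [Nat.pred_eq_sub_one]; omega
              _ ≤ 2 * n := by omega
          exact_mod_cast h'
        have : x / 2 ≤ n * (x / (2 : ℝ) ^ i) := by
          rw [← mul_div_assoc, div_le_div_iff₀ (by norm_num) h2]
          nlinarith
        nlinarith [mul_nonneg (by linarith : 0 ≤ c + 1) hlog]
    · have : B i = ∅ := by
        ext ω
        simp only [hB, Set.mem_ofPred_eq, Set.mem_empty_iff_false, iff_false, not_lt]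
        have hc' : ((Finset.univ.filter fun a : α => X i ω a = true).card : ℝ) ≤ n := by
          rw [← hcard]; exact_mod_cast Finset.card_le_univ _
        have h3 : 1 < x / (2 : ℝ) ^ i := not_le.mp hp
        have h4 : 3 * x * (n : ℝ) / (2 : ℝ) ^ i = 3 * n * (x / 2 ^ i) := by ring
        rw [h4]
        nlinarith
      rw [this]; simp
  have hbad : μ Gᶜ ≤ ENNReal.ofReal (1 / (n : ℝ) ^ c) := by
    have hsub : Gᶜ ⊆ ⋃ i ∈ Finset.Icc 1 (Nat.clog 2 n), B i := by
      intro ω hω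
      simp only [hG, Set.mem_compl_iff, Set.mem_ofPred_eq, not_forall, not_le] at hω
      obtain ⟨i, h1, h2, h3⟩ := hω
      simp only [Set.mem_iUnion]
      exact ⟨i, Finset.mem_Icc.mpr ⟨h1, h2⟩, h3⟩
    have hcl : Nat.clog 2 n ≤ n :=
      (Nat.clog_le_iff_le_pow (by norm_num)).mpr (Nat.lt_two_pow_self).le
    calc μ Gᶜ ≤ _ := measure_mono hsub
      _ ≤ ∑ i ∈ Finset.Icc 1 (Nat.clog 2 n), μ (B i) := measure_biUnion_finset_le _ _
      _ ≤ ∑ i ∈ Finset.Icc 1 (Nat.clog 2 n), ENNReal.ofReal (1 / (n : ℝ) ^ (c + 1)) :=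
          Finset.sum_le_sum hBi
      _ = (Nat.clog 2 n : ENNReal) * ENNReal.ofReal (1 / (n : ℝ) ^ (c + 1)) := by simp
      _ ≤ (n : ENNReal) * ENNReal.ofReal (1 / (n : ℝ) ^ (c + 1)) := by gcongr
      _ = _ := by
          rw [← ENNReal.ofReal_natCast, ← ENNReal.ofReal_mul hn0.le, Real.rpow_add hn0,
            Real.rpow_one]
          congr 1
          field_simp
  rw [ENNReal.ofReal_sub _ (by positivity), ENNReal.ofReal_one]
  rw [tsub_le_iff_right]
  calc (1 : ENNReal) = μ (G ∪ Gᶜ) := by simp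
    _ ≤ μ G + μ Gᶜ := measure_union_le _ _
    _ ≤ _ := by gcongr
end

section
/- Let G = (V, E) be a finite directed graph with real edge weights w and no cycle of negative total weight, and let G_q be the graph obtained from G by adding one new node q together with an edge of weight 0 from q to every node of V. Then p(v) := dist_{G_q}(q, v) is finite for every v ∈ V, and p is a valid potential function for G, i.e., w(u, v) + p(u) − p(v) ≥ 0 for every edge (u, v) ∈ E. Moreover, p remains a valid potential function for every subgraph of G obtained by deleting edges or nodes. -/
/-- `IsWalk E l s t`: the nonempty list `l` is the node sequence of a walk from `s` to `t`
in the directed graph with edge relation `E`. -/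
def IsWalk {V : Type*} (E : V → V → Prop) (l : List V) (s t : V) : Prop :=
  l ≠ [] ∧ l.head? = some s ∧ l.getLast? = some t ∧ l.Chain' E

/-- The length (total weight) of a walk with node sequence `l` under edge weights `w`. -/
def walkLen {V : Type*} (w : V → V → ℝ) (l : List V) : ℝ :=
  ((l.zip l.tail).map fun e => w e.1 e.2).sum

/-- `edist E w s t`: the distance from `s` to `t`, i.e. the infimum of the lengths of all
walks from `s` to `t` (`⊤` if there is none). -/
noncomputable def edist {V : Type*} (E : V → V → Prop) (w : V → V → ℝ) (s t : V) : EReal :=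
  sInf {x : EReal | ∃ l : List V, IsWalk E l s t ∧ x = (walkLen w l : ℝ)}

theorem walkLen_single {V : Type*} (w : V → V → ℝ) (x : V) : walkLen w [x] = 0 := by
  simp [walkLen]

theorem walkLen_cons {V : Type*} (w : V → V → ℝ) (x y : V) (l : List V) :
    walkLen w (x :: y :: l) = w x y + walkLen w (y :: l) := by
  simp [walkLen]

theorem walkLen_append {V : Type*} (w : V → V → ℝ) (a : List V) (x : V) (c : List V) :
    walkLen w (a ++ x :: c) = walkLen w (a ++ [x]) + walkLen w (x :: c) := by
  induction a with
  | nil => simp [walkLen_single]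
  | cons y a ih =>
    cases a with
    | nil => simp [walkLen_cons, walkLen_single]
    | cons z a =>
      simp only [List.cons_append, walkLen_cons] at ih ⊢
      rw [ih]; ring

theorem exists_split_of_not_nodup {V : Type*} (l : List V) (h : ¬ l.Nodup) :
    ∃ a x b c, l = a ++ x :: (b ++ x :: c) := by
  induction l with
  | nil => simp at h
  | cons y l ih =>
    by_cases hy : y ∈ l
    · obtain ⟨b, c, rfl⟩ := List.append_of_mem hy
      exact ⟨[], y, b, c, rfl⟩
    · have h2 : ¬ l.Nodup := fun h' => h (List.nodup_cons.2 ⟨hy, h'⟩)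
      obtain ⟨a, x, b, c, rfl⟩ := ih h2
      exact ⟨y :: a, x, b, c, rfl⟩

theorem walkLen_bdd {V : Type*} [Fintype V] (E : V → V → Prop) (w : V → V → ℝ)
    (hnoneg : ∀ (l : List V) (s : V), IsWalk E l s s → 2 ≤ l.length → 0 ≤ walkLen w l) :
    ∃ B : ℝ, ∀ l : List V, l.IsChain E → B ≤ walkLen w l := by
  obtain ⟨B, hB⟩ := ((List.finite_length_le V (Fintype.card V)).image (walkLen w)).bddBelow
  refine ⟨B, ?_⟩
  intro l
  induction hn : l.length using Nat.strong_induction_on generalizing l with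
  | _ n ih =>
    intro hl
    by_cases hd : l.Nodup
    · exact hB ⟨l, hd.length_le_card, rfl⟩
    · obtain ⟨a, x, b, c, rfl⟩ := exists_split_of_not_nodup l hd
      have h1 : walkLen w (a ++ x :: (b ++ x :: c)) =
          walkLen w (a ++ x :: c) + walkLen w (x :: (b ++ [x])) := by
        have e := walkLen_append w (x :: b) x c
        simp only [List.cons_append] at e
        rw [walkLen_append, e, walkLen_append w a x c]; ring
      have hc1 : (a ++ [x]).IsChain E ∧ (x :: (b ++ x :: c)).IsChain E :=
        List.isChain_split.1 hl
      have hc2 : (x :: (b ++ [x])).IsChain E ∧ (x :: c).IsChain E := by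
        have := hc1.2
        rw [← List.cons_append, List.isChain_split] at this
        exact this
      have h2 : 0 ≤ walkLen w (x :: (b ++ [x])) := by
        refine hnoneg _ x ⟨by simp, by simp, ?_, hc2.1⟩ (by simp)
        rw [← List.cons_append, List.getLast?_append]; simp
      have h3 : B ≤ walkLen w (a ++ x :: c) := by
        refine ih _ ?_ _ rfl (List.isChain_split.2 ⟨hc1.1, hc2.2⟩)
        rw [← hn]; simp
      linarith

theorem lift_chain {V : Type*} (E : V → V → Prop) (w : V → V → ℝ)
    (E' : Option V → Option V → Prop)
    (hE' : ∀ a b : Option V, E' a b ↔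
      ((a = none ∧ ∃ z : V, b = some z) ∨ (∃ u z : V, a = some u ∧ b = some z ∧ E u z)))
    (w' : Option V → Option V → ℝ)
    (hw' : ∀ u z : V, w' (some u) (some z) = w u z) (l : List (Option V)) :
    ∀ v : V, (some v :: l).IsChain E' →
      ∃ m : List V, (v :: m).IsChain E ∧ walkLen w' (some v :: l) = walkLen w (v :: m) := by
  induction l with
  | nil => exact fun v _ => ⟨[], by simp, by simp [walkLen_single]⟩
  | cons y l ih =>
    intro v h
    rw [List.isChain_cons_cons] at h
    obtain ⟨h1, h2⟩ := h
    rcases (hE' _ _).1 h1 with ⟨h, _⟩ | ⟨u, z, hu, rfl, huz⟩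
    · simp at h
    · obtain rfl : v = u := by simpa using hu
      obtain ⟨m, hm, e⟩ := ih z h2
      exact ⟨z :: m, List.isChain_cons_cons.2 ⟨huz, hm⟩, by rw [walkLen_cons, walkLen_cons, e, hw']⟩

/-- If `G` has no negative cycle, and `G_q` (nodes `Option V`, `q = none`)
is obtained by adding a new node `q` with `0`-weight edges to every node of `G`, then
`p v := dist_{G_q}(q, v)` is finite for every `v`, is a valid potential function for `G`,
and remains a valid potential function for every subgraph of `G`. -/
theorem stmt9 {V : Type} [Fintype V] [DecidableEq V]
    (E : V → V → Prop) (w : V → V → ℝ)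
    -- no cycle of negative total weight
    (hnoneg : ∀ (l : List V) (s : V), IsWalk E l s s → 2 ≤ l.length → 0 ≤ walkLen w l)
    (E' : Option V → Option V → Prop)
    (hE' : ∀ a b : Option V, E' a b ↔
      ((a = none ∧ ∃ z : V, b = some z) ∨ (∃ u z : V, a = some u ∧ b = some z ∧ E u z)))
    (w' : Option V → Option V → ℝ)
    (hw'0 : ∀ z : V, w' none (some z) = 0)
    (hw' : ∀ u z : V, w' (some u) (some z) = w u z) :
    ∃ p : V → ℝ,
      (∀ z : V, (p z : EReal) = edist E' w' none (some z)) ∧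
      (∀ u z, E u z → 0 ≤ w u z + p u - p z) ∧
      (∀ E'' : V → V → Prop, (∀ u z, E'' u z → E u z) →
        ∀ u z, E'' u z → 0 ≤ w u z + p u - p z) := by
  obtain ⟨B, hB⟩ := walkLen_bdd E w hnoneg
  have hbot : ∀ z, edist E' w' none (some z) ≠ ⊥ := by
    intro z
    have : (B : EReal) ≤ edist E' w' none (some z) := by
      refine le_sInf ?_
      rintro _ ⟨l, ⟨_, hh, hl, hc⟩, rfl⟩
      rw [EReal.coe_le_coe_iff]
      obtain _ | ⟨a, _ | ⟨b, l⟩⟩ := l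
      · simp at hh
      · simp at hh hl
        simp [hh] at hl
      · obtain rfl : a = none := by simpa using hh
        have hc' : (none :: b :: l).IsChain E' := hc
        rw [List.isChain_cons_cons] at hc'
        rcases (hE' _ _).1 hc'.1 with ⟨_, v, rfl⟩ | ⟨u, z, hu, _⟩
        · obtain ⟨m, hm, e⟩ := lift_chain E w E' hE' w' hw' l v hc'.2
          rw [walkLen_cons, hw'0, e, zero_add]
          exact hB _ hm
        · simp at hu
    intro h
    rw [h] at this
    simp at this
  have htop : ∀ z, edist E' w' none (some z) ≠ ⊤ := by
    intro z
    have : edist E' w' none (some z) ≤ ((walkLen w' [none, some z] : ℝ) : EReal) := by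
      refine sInf_le ⟨_, ⟨by simp, by simp, by simp, ?_⟩, rfl⟩
      exact List.isChain_pair.2 ((hE' _ _).2 (Or.inl ⟨rfl, z, rfl⟩))
    intro h
    rw [h] at this
    simp at this
  have hp : ∀ z, (((edist E' w' none (some z)).toReal : ℝ) : EReal) = edist E' w' none (some z) :=
    fun z => EReal.coe_toReal (htop z) (hbot z)
  have key : ∀ u z, E u z →
      0 ≤ w u z + (edist E' w' none (some u)).toReal - (edist E' w' none (some z)).toReal := by
    intro u z huz
    have : (((edist E' w' none (some z)).toReal - w u z : ℝ) : EReal) ≤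
        (((edist E' w' none (some u)).toReal : ℝ) : EReal) := by
      rw [hp u]
      refine le_sInf ?_
      rintro _ ⟨l, ⟨hne, hh, hl, hc⟩, rfl⟩
      rw [EReal.coe_le_coe_iff]
      obtain ⟨l, rfl⟩ := List.getLast?_eq_some_iff.1 hl
      have hedge : E' (some u) (some z) := (hE' _ _).2 (Or.inr ⟨u, z, rfl, rfl, huz⟩)
      have : (((edist E' w' none (some z)).toReal : ℝ) : EReal) ≤
          ((walkLen w' (l ++ [some u, some z]) : ℝ) : EReal) := by
        rw [hp z]
        refine sInf_le ⟨_, ⟨by simp, ?_, by simp, ?_⟩, rfl⟩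
        · cases l <;> simpa using hh
        · exact List.isChain_split.2 ⟨hc, List.isChain_pair.2 hedge⟩
      rw [EReal.coe_le_coe_iff, walkLen_append, walkLen_cons, walkLen_single, hw'] at this
      linarith
    rw [EReal.coe_le_coe_iff] at this
    linarith
  exact ⟨fun z => (edist E' w' none (some z)).toReal, hp, key,
    fun E'' hE'' u z h => key u z (hE'' u z h)⟩
end
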